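/- (Proposition 4.4) For every local compass graph ⟨D,L⟩ there is a construction G such that λ(G)=⟨D,L⟩. -/

import Mathlib

namespace PluralCuts

/-- The two horizontal directions: west and east. -/
inductive XDir : Type
  | W
  | E
deriving DecidableEq

/-- The two vertical directions: north and south. -/
inductive YDir : Type
  | N
  | S
deriving DecidableEq

/-- The other element of `{W, E}`. -/
def XDir.other : XDir → XDir
  | .W => .E
  | .E => .W

/-- A helper choosing between two values according to an `XDir`. -/
def pick {α : Type*} (w e : α) : XDir → α
  | .W => w
  | .E => e

/-- A digraph on (a finite set of) natural-number vertices: a finite set of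
vertices together with a finite set of edges (ordered pairs). -/
structure DG : Type where
  verts : Finset ℕ
  edges : Finset (ℕ × ℕ)

namespace DG

/-- `D` is an oriented graph: edges lie between vertices, the edge relation is
irreflexive and antisymmetric, and the vertex set is nonempty. -/
def IsOriented (D : DG) : Prop :=
  (∀ e ∈ D.edges, e.1 ∈ D.verts ∧ e.2 ∈ D.verts) ∧
  (∀ e ∈ D.edges, e.1 ≠ e.2) ∧
  (∀ a b : ℕ, (a, b) ∈ D.edges → (b, a) ∉ D.edges) ∧
  D.verts.Nonempty

/-- A `W`-vertex: no edge ends in it. -/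
def isWVert (D : DG) (a : ℕ) : Prop := a ∈ D.verts ∧ ∀ b, (b, a) ∉ D.edges

/-- An `E`-vertex: no edge begins in it. -/
def isEVert (D : DG) (a : ℕ) : Prop := a ∈ D.verts ∧ ∀ b, (a, b) ∉ D.edges

/-- An inner vertex: some edge ends in it and some edge begins in it. -/
def isInner (D : DG) (a : ℕ) : Prop :=
  a ∈ D.verts ∧ (∃ b, (b, a) ∈ D.edges) ∧ (∃ b, (a, b) ∈ D.edges)

/-- A `W`-edge: an edge beginning in a `W`-vertex. -/
def isWEdge (D : DG) (e : ℕ × ℕ) : Prop := e ∈ D.edges ∧ D.isWVert e.1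

/-- An `E`-edge: an edge ending in an `E`-vertex. -/
def isEEdge (D : DG) (e : ℕ × ℕ) : Prop := e ∈ D.edges ∧ D.isEVert e.2

/-- An `X`-edge, for `X ∈ {W, E}`. -/
def isXEdge (D : DG) : XDir → (ℕ × ℕ) → Prop
  | .W => D.isWEdge
  | .E => D.isEEdge

/-- An inner edge: it begins and ends in inner vertices. -/
def isInnerEdge (D : DG) (e : ℕ × ℕ) : Prop :=
  e ∈ D.edges ∧ D.isInner e.1 ∧ D.isInner e.2

/-- A functional `W`-edge `(a,b)`: `(a,c) ∈ D` implies `b = c`. -/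
def funcWEdge (D : DG) (e : ℕ × ℕ) : Prop :=
  D.isWEdge e ∧ ∀ c, (e.1, c) ∈ D.edges → c = e.2

/-- A functional `E`-edge `(b,a)`: `(c,a) ∈ D` implies `b = c`. -/
def funcEEdge (D : DG) (e : ℕ × ℕ) : Prop :=
  D.isEEdge e ∧ ∀ c, (c, e.2) ∈ D.edges → c = e.1

/-- `D` is `W`-`E`-functional: all its `W`-edges and `E`-edges are functional. -/
def WEFunctional (D : DG) : Prop :=
  (∀ e, D.isWEdge e → D.funcWEdge e) ∧ (∀ e, D.isEEdge e → D.funcEEdge e)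

/-- Semi-adjacency: `(a,b)` or `(b,a)` is an edge. -/
def semiAdj (D : DG) (a b : ℕ) : Prop := (a, b) ∈ D.edges ∨ (b, a) ∈ D.edges

/-- A semipath: a nonempty sequence of mutually distinct vertices in which any
two consecutive vertices are semi-adjacent. -/
def IsSemipath (D : DG) (l : List ℕ) : Prop :=
  l ≠ [] ∧ (∀ a ∈ l, a ∈ D.verts) ∧ l.Nodup ∧ l.Chain' D.semiAdj

/-- A path: a nonempty sequence of mutually distinct vertices in which
`(a_i, a_{i+1})` is an edge for consecutive vertices. -/
def IsPath (D : DG) (l : List ℕ) : Prop :=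
  l ≠ [] ∧ (∀ a ∈ l, a ∈ D.verts) ∧ l.Nodup ∧
    l.Chain' (fun a b => (a, b) ∈ D.edges)

/-- A semicycle: a sequence `a_1, ..., a_n` of vertices with `n ≥ 4`,
`a_1 = a_n`, `a_1, ..., a_{n-1}` mutually distinct, and consecutive vertices
semi-adjacent. -/
def IsSemicycle (D : DG) (l : List ℕ) : Prop :=
  4 ≤ l.length ∧ (∀ a ∈ l, a ∈ D.verts) ∧ l.head? = l.getLast? ∧
  l.dropLast.Nodup ∧ l.Chain' D.semiAdj

/-- `D` is weakly connected: every two vertices are joined by a semipath. -/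
def WeaklyConnected (D : DG) : Prop :=
  ∀ a ∈ D.verts, ∀ b ∈ D.verts,
    ∃ l, D.IsSemipath l ∧ l.head? = some a ∧ l.getLast? = some b

/-- `D` is asemicyclic: it has no semicycles. -/
def Asemicyclic (D : DG) : Prop := ∀ l, ¬ D.IsSemicycle l

/-- The cut `D_W[e_W - e_E]D_E`:
`(D_W - {e_W}) ∪ (D_E - {e_E}) ∪ {(e_W.1, e_E.2)}` on the union of the vertex
sets with `e_W.2` and `e_E.1` omitted. -/
def cut (DW DE : DG) (eW eE : ℕ × ℕ) : DG where
  verts := (DW.verts ∪ DE.verts) \ {eW.2, eE.1}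
  edges := insert (eW.1, eE.2) ((DW.edges.erase eW) ∪ (DE.edges.erase eE))

end DG

/-- The type of assignments of four distinguished edges `NW, SW, NE, SE`. -/
abbrev DistE : Type := YDir → XDir → ℕ × ℕ

/-- The type of labellings assigning to (inner) vertices four edges. -/
abbrev Lab : Type := ℕ → YDir → XDir → ℕ × ℕ

/-- `⟨D, ε⟩` is a basic K-graph: `D` is an oriented graph with a single inner
vertex `b`, all edges begin or end in `b`, every other vertex is joined to `b`
by an edge, there is at least one edge ending in `b` and one beginning in `b`,
the distinguished edges `ε Y W` end in `b` and `ε Y E` begin in `b`, and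
(XYB): if there are at least two `X`-edges then `NX ≠ SX`. -/
def IsBasicK (D : DG) (ε : DistE) : Prop :=
  D.IsOriented ∧
  ∃ b ∈ D.verts,
    (∀ e ∈ D.edges, e.1 = b ∨ e.2 = b) ∧
    (∀ v ∈ D.verts, v = b ∨ (v, b) ∈ D.edges ∨ (b, v) ∈ D.edges) ∧
    (∃ a, (a, b) ∈ D.edges) ∧ (∃ c, (b, c) ∈ D.edges) ∧
    (∀ Y : YDir, ε Y XDir.W ∈ D.edges ∧ (ε Y XDir.W).2 = b ∧
      ε Y XDir.E ∈ D.edges ∧ (ε Y XDir.E).1 = b) ∧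
    (2 ≤ (D.edges.filter (fun e => e.2 = b)).card →
      ε YDir.N XDir.W ≠ ε YDir.S XDir.W) ∧
    (2 ≤ (D.edges.filter (fun e => e.1 = b)).card →
      ε YDir.N XDir.E ≠ ε YDir.S XDir.E)

/-- `⟨D, ε⟩` is a basic Q-graph: as a basic K-graph but with no requirement
(XYB) on the distinguished edges. -/
def IsBasicQ (D : DG) (ε : DistE) : Prop :=
  D.IsOriented ∧
  ∃ b ∈ D.verts,
    (∀ e ∈ D.edges, e.1 = b ∨ e.2 = b) ∧
    (∀ v ∈ D.verts, v = b ∨ (v, b) ∈ D.edges ∨ (b, v) ∈ D.edges) ∧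
    (∃ a, (a, b) ∈ D.edges) ∧ (∃ c, (b, c) ∈ D.edges) ∧
    (∀ Y : YDir, ε Y XDir.W ∈ D.edges ∧ (ε Y XDir.W).2 = b ∧
      ε Y XDir.E ∈ D.edges ∧ (ε Y XDir.E).1 = b)

/-- Finite binary trees whose nodes carry an oriented graph, four
distinguished edges, and (at internal nodes) the two cut edges. -/
inductive CTree : Type
  | leaf (D : DG) (ε : DistE)
  | node (D : DG) (ε : DistE) (eW eE : ℕ × ℕ) (l r : CTree)

namespace CTree

/-- The graph at the root of the tree. -/
def rootGraph : CTree → DG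
  | .leaf D _ => D
  | .node D _ _ _ _ _ => D

/-- The distinguished edges at the root of the tree. -/
def dist : CTree → DistE
  | .leaf _ ε => ε
  | .node _ ε _ _ _ _ => ε

/-- The list of graphs-with-distinguished-edges at the leaves of the tree
(the basic K-graphs determining the leaves of a construction). -/
def leaves : CTree → List (DG × DistE)
  | .leaf D ε => [(D, ε)]
  | .node _ _ _ _ l r => l.leaves ++ r.leaves

end CTree

/-- The tree `G_W[e_W - e_E]G_E`, whose root graph is the cut of the root
graphs and whose distinguished edges are given by (XYD). -/
def mkNode (GW GE : CTree) (eW eE : ℕ × ℕ) : CTree :=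
  .node (DG.cut GW.rootGraph GE.rootGraph eW eE)
    (fun Y X =>
      match X with
      | .W => if eE = GE.dist Y XDir.W then GW.dist Y XDir.W else GE.dist Y XDir.W
      | .E => if eW = GW.dist Y XDir.E then GE.dist Y XDir.E else GW.dist Y XDir.E)
    eW eE GW GE

/-- The inductive notion of construction (of a global K-graph). -/
inductive IsConstruction : CTree → Prop
  | leaf (D : DG) (ε : DistE) (h : IsBasicK D ε) : IsConstruction (.leaf D ε)
  | node (D : DG) (ε : DistE) (eW eE : ℕ × ℕ) (GW GE : CTree)
      (hW : IsConstruction GW) (hE : IsConstruction GE)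
      (hdisj : Disjoint GW.rootGraph.verts GE.rootGraph.verts)
      (heW : GW.rootGraph.funcEEdge eW)
      (heE : GE.rootGraph.funcWEdge eE)
      (hD : D = DG.cut GW.rootGraph GE.rootGraph eW eE)
      (hXYC : ∀ Y : YDir, eW = GW.dist Y XDir.E ∨ eE = GE.dist Y XDir.W)
      (hεW : ∀ Y : YDir, ε Y XDir.W =
        if eE = GE.dist Y XDir.W then GW.dist Y XDir.W else GE.dist Y XDir.W)
      (hεE : ∀ Y : YDir, ε Y XDir.E =
        if eW = GW.dist Y XDir.E then GE.dist Y XDir.E else GW.dist Y XDir.E) :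
      IsConstruction (.node D ε eW eE GW GE)

/-- The inductive notion of construction of a global Q-graph: as
`IsConstruction` but with basic Q-graphs at the leaves. -/
inductive IsConstructionQ : CTree → Prop
  | leaf (D : DG) (ε : DistE) (h : IsBasicQ D ε) : IsConstructionQ (.leaf D ε)
  | node (D : DG) (ε : DistE) (eW eE : ℕ × ℕ) (GW GE : CTree)
      (hW : IsConstructionQ GW) (hE : IsConstructionQ GE)
      (hdisj : Disjoint GW.rootGraph.verts GE.rootGraph.verts)
      (heW : GW.rootGraph.funcEEdge eW)
      (heE : GE.rootGraph.funcWEdge eE)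
      (hD : D = DG.cut GW.rootGraph GE.rootGraph eW eE)
      (hXYC : ∀ Y : YDir, eW = GW.dist Y XDir.E ∨ eE = GE.dist Y XDir.W)
      (hεW : ∀ Y : YDir, ε Y XDir.W =
        if eE = GE.dist Y XDir.W then GW.dist Y XDir.W else GE.dist Y XDir.W)
      (hεE : ∀ Y : YDir, ε Y XDir.E =
        if eW = GW.dist Y XDir.E then GE.dist Y XDir.E else GW.dist Y XDir.E) :
      IsConstructionQ (.node D ε eW eE GW GE)

/-- ρ-equivalence of constructions: the least equivalence relation containing
ρ1, ρ2, ρ3 and closed under congruence with respect to cuts. -/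
inductive RhoEquiv : CTree → CTree → Prop
  | rho1 (P Q R : CTree) (eW eE fW fE : ℕ × ℕ)
      (hP : IsConstruction P) (hQ : IsConstruction Q) (hR : IsConstruction R)
      (heW : P.rootGraph.isEEdge eW) (hfW : Q.rootGraph.isEEdge fW)
      (heE : Q.rootGraph.isWEdge eE) (hfE : R.rootGraph.isWEdge fE)
      (h1 : IsConstruction (mkNode (mkNode P Q eW eE) R fW fE))
      (h2 : IsConstruction (mkNode P (mkNode Q R fW fE) eW eE)) :
      RhoEquiv (mkNode (mkNode P Q eW eE) R fW fE)
               (mkNode P (mkNode Q R fW fE) eW eE)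
  | rho2 (P Q R : CTree) (eW eE fW fE : ℕ × ℕ)
      (hP : IsConstruction P) (hQ : IsConstruction Q) (hR : IsConstruction R)
      (heW : P.rootGraph.isEEdge eW) (hfW : P.rootGraph.isEEdge fW)
      (hne : eW ≠ fW)
      (heE : Q.rootGraph.isWEdge eE) (hfE : R.rootGraph.isWEdge fE)
      (h1 : IsConstruction (mkNode (mkNode P Q eW eE) R fW fE))
      (h2 : IsConstruction (mkNode (mkNode P R fW fE) Q eW eE)) :
      RhoEquiv (mkNode (mkNode P Q eW eE) R fW fE)
               (mkNode (mkNode P R fW fE) Q eW eE)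
  | rho3 (P Q R : CTree) (eW eE fW fE : ℕ × ℕ)
      (hP : IsConstruction P) (hQ : IsConstruction Q) (hR : IsConstruction R)
      (heE : P.rootGraph.isWEdge eE) (hfE : P.rootGraph.isWEdge fE)
      (hne : eE ≠ fE)
      (heW : Q.rootGraph.isEEdge eW) (hfW : R.rootGraph.isEEdge fW)
      (h1 : IsConstruction (mkNode R (mkNode Q P eW eE) fW fE))
      (h2 : IsConstruction (mkNode Q (mkNode R P fW fE) eW eE)) :
      RhoEquiv (mkNode R (mkNode Q P eW eE) fW fE)
               (mkNode Q (mkNode R P fW fE) eW eE)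
  | congr (G1 G2 H1 H2 : CTree) (eW eE : ℕ × ℕ)
      (h12 : RhoEquiv G1 G2) (h34 : RhoEquiv H1 H2)
      (hc1 : IsConstruction (mkNode G1 H1 eW eE))
      (hc2 : IsConstruction (mkNode G2 H2 eW eE)) :
      RhoEquiv (mkNode G1 H1 eW eE) (mkNode G2 H2 eW eE)
  | refl (G : CTree) (h : IsConstruction G) : RhoEquiv G G
  | symm {G H : CTree} (h : RhoEquiv G H) : RhoEquiv H G
  | trans {G H K : CTree} (h1 : RhoEquiv G H) (h2 : RhoEquiv H K) :
      RhoEquiv G K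

/-- The class `[G]`: all constructions with the same root graph as `G` whose
leaves are determined by the same basic K-graphs as those of `G`. -/
def classOf (G : CTree) : Set CTree :=
  {H | IsConstruction H ∧ H.rootGraph = G.rootGraph ∧
    ∀ p : DG × DistE, p ∈ H.leaves ↔ p ∈ G.leaves}

/-- Renaming the vertices of a digraph along a function. -/
def DG.rename (f : ℕ → ℕ) (D : DG) : DG where
  verts := D.verts.image f
  edges := D.edges.image (fun e => (f e.1, f e.2))

/-- Renaming the vertices throughout a tree. -/
def CTree.rename (f : ℕ → ℕ) : CTree → CTree
  | .leaf D ε => .leaf (DG.rename f D) (fun Y X => (f (ε Y X).1, f (ε Y X).2))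
  | .node D ε eW eE l r =>
      .node (DG.rename f D) (fun Y X => (f (ε Y X).1, f (ε Y X).2))
        (f eW.1, f eW.2) (f eE.1, f eE.2) (l.rename f) (r.rename f)

/-- σ-equivalence: `H` is obtained from `G` by a bijective renaming of
vertices that fixes the root vertices (so only secondary vertices may be
renamed). -/
def SigmaEquiv (G H : CTree) : Prop :=
  ∃ f : ℕ ≃ ℕ, (∀ v ∈ G.rootGraph.verts, f v = v) ∧ H = G.rename f

/-- The global compass graph `‖G‖`: all constructions σ-equivalent to a
construction in `[G]`. -/
def normClass (G : CTree) : Set CTree :=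
  {H | ∃ K ∈ classOf G, SigmaEquiv K H}

/-- The labelling `L` of `λ(G) = ⟨D, L⟩`, defined by induction on `G`: at a
leaf given by a basic K-graph with inner vertex `b`, `YX(b) = YX(B)`; at a
node, the value is inherited from the appropriate subtree unless it is one of
the two cut edges, in which case it is the new edge introduced by the cut. -/
def lamG : CTree → Lab
  | .leaf _ ε => fun _ => ε
  | .node _ _ eW eE l r => fun a Y X =>
      let v := if a ∈ l.rootGraph.verts then lamG l a Y X else lamG r a Y X
      if v = eW ∨ v = eE then (eW.1, eE.2) else v

/-- `L` assigns to every inner vertex `a` edges `L a Y W` ending in `a` and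
edges `L a Y E` beginning in `a`. -/
def ProperLab (D : DG) (L : Lab) : Prop :=
  ∀ a, D.isInner a → ∀ Y : YDir,
    L a Y XDir.W ∈ D.edges ∧ (L a Y XDir.W).2 = a ∧
    L a Y XDir.E ∈ D.edges ∧ (L a Y XDir.E).1 = a

/-- `⟨D, L⟩` separates `N` from `S`. -/
def SeparatesNS (D : DG) (L : Lab) : Prop :=
  ∀ a, D.isInner a →
    (2 ≤ (D.edges.filter (fun e => e.2 = a)).card →
      L a YDir.N XDir.W ≠ L a YDir.S XDir.W) ∧
    (2 ≤ (D.edges.filter (fun e => e.1 = a)).card →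
      L a YDir.N XDir.E ≠ L a YDir.S XDir.E)

/-- A list `a_1, ..., a_n` is `Y`-decent in `⟨D, L⟩`: `n = 1`, or
`YE(a_1) = (a_1, a_2)`, or `YW(a_n) = (a_{n-1}, a_n)`. -/
def Ydecent (L : Lab) (Y : YDir) (l : List ℕ) : Prop :=
  ∀ a b t, l = a :: b :: t →
    (L a Y XDir.E = (a, b) ∨
      ∃ c d t', l.reverse = d :: c :: t' ∧ L d Y XDir.W = (c, d))

/-- `⟨D, L⟩` is a local compass graph. -/
def IsLocalCompass (D : DG) (L : Lab) : Prop :=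
  D.IsOriented ∧ ProperLab D L ∧
  D.WeaklyConnected ∧ D.Asemicyclic ∧ D.WEFunctional ∧ (∃ a, D.isInner a) ∧
  SeparatesNS D L ∧
  (∀ l, D.IsPath l → Ydecent L YDir.N l ∧ Ydecent L YDir.S l)

/-- A path (list) covers an edge `g` when `g` is a pair of consecutive
vertices of the list. -/
def covers (l : List ℕ) (g : ℕ × ℕ) : Prop := g ∈ l.zip l.tail

/-- A `YX`-edge in `⟨D, L⟩`. -/
def YXedge (D : DG) (L : Lab) (Y : YDir) : XDir → (ℕ × ℕ) → Prop
  | .W, g => g ∈ D.edges ∧ (L g.2 Y XDir.W = g ∨ D.isEEdge g)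
  | .E, g => g ∈ D.edges ∧ (L g.1 Y XDir.E = g ∨ D.isWEdge g)

/-- A proper semipath: a semipath such that neither it nor its reverse is a
path. -/
def ProperSemipath (D : DG) (l : List ℕ) : Prop :=
  D.IsSemipath l ∧ ¬ D.IsPath l ∧ ¬ D.IsPath l.reverse

/-- A transversal edge `(a,b)`: there is a proper semipath beginning with
`a, b` and a proper semipath beginning with `b, a`. -/
def Transversal (D : DG) (e : ℕ × ℕ) : Prop :=
  e ∈ D.edges ∧
  (∃ t, ProperSemipath D (e.1 :: e.2 :: t)) ∧
  (∃ t, ProperSemipath D (e.2 :: e.1 :: t))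

/-- The edge of `D` that connects two semi-adjacent vertices `a` and `b`. -/
def connEdge (D : DG) (a b : ℕ) : ℕ × ℕ :=
  if (a, b) ∈ D.edges then (a, b) else (b, a)

/-- The connecting edges of a list: the edges connecting its consecutive
vertices. -/
def connEdges (D : DG) (l : List ℕ) (e : ℕ × ℕ) : Prop :=
  ∃ p ∈ l.zip l.tail, e = connEdge D p.1 p.2

/-- A bifurcation: three distinct edges with a common vertex. -/
def Bifurcation (D : DG) (e1 e2 e3 : ℕ × ℕ) : Prop :=
  e1 ∈ D.edges ∧ e2 ∈ D.edges ∧ e3 ∈ D.edges ∧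
  e1 ≠ e2 ∧ e1 ≠ e3 ∧ e2 ≠ e3 ∧
  ∃ v, (v = e1.1 ∨ v = e1.2) ∧ (v = e2.1 ∨ v = e2.2) ∧ (v = e3.1 ∨ v = e3.2)

/-- A K-graph: a weakly connected, asemicyclic, `W`-`E`-functional oriented
graph with an inner vertex in which no bifurcation is transversal. -/
def IsKGraph (D : DG) : Prop :=
  D.IsOriented ∧ D.WeaklyConnected ∧ D.Asemicyclic ∧ D.WEFunctional ∧
  (∃ a, D.isInner a) ∧
  ∀ e1 e2 e3, Bifurcation D e1 e2 e3 →
    ¬ (Transversal D e1 ∧ Transversal D e2 ∧ Transversal D e3)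

/-- A Q-graph: a weakly connected, asemicyclic, `W`-`E`-functional oriented
graph with an inner vertex. -/
def IsQGraph (D : DG) : Prop :=
  D.IsOriented ∧ D.WeaklyConnected ∧ D.Asemicyclic ∧ D.WEFunctional ∧
  ∃ a, D.isInner a

open Relation

/-- The digraph with one edge removed. -/
def DG.del (D : DG) (e : ℕ × ℕ) : DG := ⟨D.verts, D.edges.erase e⟩

/-- Reachability between edges along directed walks. -/
def ER (D : DG) : ℕ × ℕ → ℕ × ℕ → Prop :=
  ReflTransGen (fun g h => h ∈ D.edges ∧ g.2 = h.1)

/-- Technical reformulation of local compass graphs. -/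
structure TP (D : DG) (L : Lab) : Prop where
  vm : ∀ g ∈ D.edges, g.1 ∈ D.verts ∧ g.2 ∈ D.verts
  conn : ∀ u ∈ D.verts, ∀ v ∈ D.verts, ReflTransGen D.semiAdj u v
  br : ∀ g ∈ D.edges, ¬ ReflTransGen (D.del g).semiAdj g.1 g.2
  fw : ∀ g ∈ D.edges, ∀ h ∈ D.edges, D.isWVert g.1 → h.1 = g.1 → h = g
  fe : ∀ g ∈ D.edges, ∀ h ∈ D.edges, D.isEVert g.2 → h.2 = g.2 → h = g
  inn : ∃ a, D.isInner a
  prop : ProperLab D L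
  sepW : ∀ v, D.isInner v → ∀ g ∈ D.edges, ∀ h ∈ D.edges, g.2 = v → h.2 = v → g ≠ h →
    L v YDir.N XDir.W ≠ L v YDir.S XDir.W
  sepE : ∀ v, D.isInner v → ∀ g ∈ D.edges, ∀ h ∈ D.edges, g.1 = v → h.1 = v → g ≠ h →
    L v YDir.N XDir.E ≠ L v YDir.S XDir.E
  dec : ∀ Y, ∀ g ∈ D.edges, ∀ h ∈ D.edges, ER D g h → D.isInner g.1 → D.isInner h.2 →
    L g.1 Y XDir.E = g ∨ L h.2 Y XDir.W = h

/-- Candidates for the global distinguished edge `YW`. -/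
def goodW (D : DG) (L : Lab) (Y : YDir) (f : ℕ × ℕ) : Prop :=
  D.isWEdge f ∧ ∀ g ∈ D.edges, ER D f g → D.isInner g.2 → L g.2 Y XDir.W = g

/-- Candidates for the global distinguished edge `YE`. -/
def goodE (D : DG) (L : Lab) (Y : YDir) (f : ℕ × ℕ) : Prop :=
  D.isEEdge f ∧ ∀ g ∈ D.edges, ER D g f → D.isInner g.1 → L g.1 Y XDir.E = g

/-- The induced map on edges. -/
def ph (ψ : ℕ → ℕ) (g : ℕ × ℕ) : ℕ × ℕ := (ψ g.1, ψ g.2)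

structure Half (D : DG) (L : Lab) (D' : DG) (L' : Lab) (ψ : ℕ → ℕ) : Prop where
  map : ∀ g ∈ D'.edges, ph ψ g ∈ D.edges
  inj : ∀ g ∈ D'.edges, ∀ h ∈ D'.edges, ph ψ g = ph ψ h → g = h
  fix : ∀ v, D'.isInner v → D.isInner v ∧ ψ v = v
  lab : ∀ v, D'.isInner v → ∀ Y X, ph ψ (L' v Y X) = L v Y X
  prop : ProperLab D' L'

theorem liftRel {α β : Type} {r : α → α → Prop} {s : β → β → Prop} (f : α → β)
    (hf : ∀ u v, r u v → s (f u) (f v)) {u v : α} (h : ReflTransGen r u v) :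
    ReflTransGen s (f u) (f v) := by
  induction h with
  | refl => exact .refl
  | tail _ h2 ih => exact ih.tail (hf _ _ h2)

theorem Half.er {D L D' L' ψ} (H : Half D L D' L' ψ) {g h} (r : ER D' g h) :
    ER D (ph ψ g) (ph ψ h) := by
  refine liftRel (ph ψ) ?_ r
  rintro g h ⟨h1, h2⟩
  exact ⟨H.map _ h1, by simp [ph, h2]⟩

theorem Half.labE {D L D' L' ψ} (H : Half D L D' L' ψ) {g Y} (hg : g ∈ D'.edges)
    (hi : D'.isInner g.1) : L' g.1 Y XDir.E = g ↔ L (ph ψ g).1 Y XDir.E = ph ψ g := by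
  have h1 : (ph ψ g).1 = g.1 := (H.fix _ hi).2
  rw [h1, ← H.lab _ hi]
  exact ⟨fun h => by rw [h], fun h => H.inj _ (H.prop _ hi Y).2.2.1 _ hg h⟩

theorem Half.labW {D L D' L' ψ} (H : Half D L D' L' ψ) {g Y} (hg : g ∈ D'.edges)
    (hi : D'.isInner g.2) : L' g.2 Y XDir.W = g ↔ L (ph ψ g).2 Y XDir.W = ph ψ g := by
  have h1 : (ph ψ g).2 = g.2 := (H.fix _ hi).2
  rw [h1, ← H.lab _ hi]
  exact ⟨fun h => by rw [h], fun h => H.inj _ (H.prop _ hi Y).1 _ hg h⟩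

theorem Half.tp {D L D' L' ψ} (H : Half D L D' L' ψ) (hP : TP D L)
    (vm : ∀ g ∈ D'.edges, g.1 ∈ D'.verts ∧ g.2 ∈ D'.verts)
    (conn : ∀ u ∈ D'.verts, ∀ v ∈ D'.verts, ReflTransGen D'.semiAdj u v)
    (fw : ∀ g ∈ D'.edges, ∀ h ∈ D'.edges, D'.isWVert g.1 → h.1 = g.1 → h = g)
    (fe : ∀ g ∈ D'.edges, ∀ h ∈ D'.edges, D'.isEVert g.2 → h.2 = g.2 → h = g)
    (inn : ∃ a, D'.isInner a) : TP D' L' where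
  vm := vm
  conn := conn
  fw := fw
  fe := fe
  inn := inn
  prop := H.prop
  br := by
    intro g hg r
    refine hP.br _ (H.map g hg) (liftRel ψ ?_ r)
    intro u v huv
    have key : ∀ k ∈ (D'.del g).edges, ph ψ k ∈ (D.del (ph ψ g)).edges := by
      intro k hk
      simp only [DG.del, Finset.mem_erase] at hk ⊢
      exact ⟨fun h => hk.1 (H.inj _ hk.2 _ hg h), H.map _ hk.2⟩
    exact huv.imp (key _) (key _)
  sepW := by
    intro v hv g hg h hh e1 e2 hne heq
    have := H.fix v hv
    refine hP.sepW v this.1 _ (H.map g hg) _ (H.map h hh) ?_ ?_ ?_ ?_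
    · simp [ph, e1, this.2]
    · simp [ph, e2, this.2]
    · exact fun h' => hne (H.inj _ hg _ hh h')
    · rw [← H.lab v hv, ← H.lab v hv, heq]
  sepE := by
    intro v hv g hg h hh e1 e2 hne heq
    have := H.fix v hv
    refine hP.sepE v this.1 _ (H.map g hg) _ (H.map h hh) ?_ ?_ ?_ ?_
    · simp [ph, e1, this.2]
    · simp [ph, e2, this.2]
    · exact fun h' => hne (H.inj _ hg _ hh h')
    · rw [← H.lab v hv, ← H.lab v hv, heq]
  dec := by
    intro Y g hg h hh r i1 i2
    rw [H.labE hg i1, H.labW hh i2]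
    have h1 : (ph ψ g).1 = g.1 := (H.fix _ i1).2
    have h2 : (ph ψ h).2 = h.2 := (H.fix _ i2).2
    exact hP.dec Y _ (H.map g hg) _ (H.map h hh) (H.er r)
      (h1 ▸ (H.fix _ i1).1) (h2 ▸ (H.fix _ i2).1)

/-- Data of a splitting of `D` along an inner edge `(a, b)`. -/
structure Split (D : DG) (a b : ℕ) (A B : Finset ℕ) (x y : ℕ) : Prop where
  he : (a, b) ∈ D.edges
  ia : D.isInner a
  ib : D.isInner b
  aA : a ∈ A
  bB : b ∈ B
  disj : ∀ v ∈ A, v ∉ B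
  un : ∀ v, v ∈ D.verts ↔ v ∈ A ∨ v ∈ B
  ed : ∀ u v, (u, v) ∈ D.edges → (u = a ∧ v = b) ∨ (u ∈ A ∧ v ∈ A) ∨ (u ∈ B ∧ v ∈ B)
  cA : ∀ v ∈ A, ReflTransGen (D.del (a, b)).semiAdj a v
  cB : ∀ v ∈ B, ReflTransGen (D.del (a, b)).semiAdj b v
  hx : x ∉ D.verts
  hy : y ∉ D.verts
  xy : x ≠ y

theorem rtg_symm {D : DG} {u v : ℕ} (h : ReflTransGen D.semiAdj u v) :
    ReflTransGen D.semiAdj v u := by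
  induction h with
  | refl => exact .refl
  | tail _ h2 ih => exact ReflTransGen.head (show D.semiAdj _ _ from Or.symm h2) ih

theorem exists_split {D : DG} {L : Lab} (hP : TP D L) {a b : ℕ} (he : (a, b) ∈ D.edges)
    (ia : D.isInner a) (ib : D.isInner b) : ∃ A B x y, Split D a b A B x y := by
  classical
  obtain ⟨x, hx⟩ := Infinite.exists_notMem_finset D.verts
  obtain ⟨y, hy⟩ := Infinite.exists_notMem_finset (insert x D.verts)
  have hbr := hP.br _ he
  have step : ∀ c u v, ReflTransGen (D.del (a, b)).semiAdj c u → (D.del (a,b)).semiAdj u v →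
    ReflTransGen (D.del (a, b)).semiAdj c v := fun c u v h1 h2 => h1.tail h2
  have un : ∀ v, ReflTransGen D.semiAdj a v → ReflTransGen (D.del (a, b)).semiAdj a v ∨
      ReflTransGen (D.del (a, b)).semiAdj b v := by
    intro v hv
    induction hv with
    | refl => exact Or.inl .refl
    | @tail u w h1 h2 ih =>
      by_cases hw : w = a
      · subst hw; exact Or.inl .refl
      by_cases hw' : w = b
      · subst hw'; exact Or.inr .refl
      have : (D.del (a, b)).semiAdj u w := by
        simp only [DG.semiAdj, DG.del, Finset.mem_erase] at h2 ⊢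
        grind
      exact ih.imp (fun h => h.tail this) (fun h => h.tail this)
  have dj : ∀ v, ReflTransGen (D.del (a, b)).semiAdj a v →
      ReflTransGen (D.del (a, b)).semiAdj b v → False := by
    intro v h1 h2
    exact hbr (h1.trans (rtg_symm h2))
  refine ⟨D.verts.filter (fun v => ReflTransGen (D.del (a, b)).semiAdj a v),
    D.verts.filter (fun v => ReflTransGen (D.del (a, b)).semiAdj b v), x, y, ?_⟩
  constructor
  · exact he
  · exact ia
  · exact ib
  · exact Finset.mem_filter.2 ⟨ia.1, .refl⟩
  · exact Finset.mem_filter.2 ⟨ib.1, .refl⟩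
  · intro v h1 h2
    exact dj v (Finset.mem_filter.1 h1).2 (Finset.mem_filter.1 h2).2
  · intro v
    simp only [Finset.mem_filter]
    constructor
    · intro h
      exact (un v (hP.conn a ia.1 v h)).imp (fun k => ⟨h, k⟩) (fun k => ⟨h, k⟩)
    · rintro (h | h) <;> exact h.1
  · intro u v huv
    by_cases hh : (u, v) = (a, b)
    · left; simpa using hh
    right
    have hd : (D.del (a, b)).semiAdj u v := Or.inl (Finset.mem_erase.2 ⟨hh, huv⟩)
    have hm := hP.vm _ huv
    simp only [Finset.mem_filter]
    exact (un u (hP.conn a ia.1 u hm.1)).imp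
      (fun k => ⟨⟨hm.1, k⟩, hm.2, k.tail hd⟩) (fun k => ⟨⟨hm.1, k⟩, hm.2, k.tail hd⟩)
  · intro v h; exact (Finset.mem_filter.1 h).2
  · intro v h; exact (Finset.mem_filter.1 h).2
  · exact hx
  · exact fun h => hy (Finset.mem_insert_of_mem h)
  · rintro rfl; exact hy (Finset.mem_insert_self _ _)

def dW (D : DG) (a : ℕ) (A : Finset ℕ) (x : ℕ) : DG :=
  ⟨insert x A, insert (a, x) (D.edges.filter (fun g => g.1 ∈ A ∧ g.2 ∈ A))⟩

def dE (D : DG) (b : ℕ) (B : Finset ℕ) (y : ℕ) : DG :=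
  ⟨insert y B, insert (y, b) (D.edges.filter (fun g => g.1 ∈ B ∧ g.2 ∈ B))⟩

def newLbl (L : Lab) (e e' : ℕ × ℕ) : Lab := fun v Y X => if L v Y X = e then e' else L v Y X

def sub1 (x b : ℕ) : ℕ → ℕ := fun v => if v = x then b else v

theorem mem_dW {D : DG} {a A x u v} : (u, v) ∈ (dW D a A x).edges ↔
    (u = a ∧ v = x) ∨ ((u, v) ∈ D.edges ∧ u ∈ A ∧ v ∈ A) := by
  simp [dW]

theorem mem_dE {D : DG} {b B y u v} : (u, v) ∈ (dE D b B y).edges ↔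
    (u = y ∧ v = b) ∨ ((u, v) ∈ D.edges ∧ u ∈ B ∧ v ∈ B) := by
  simp [dE]

section
variable {D : DG} {a b x y : ℕ} {A B : Finset ℕ}

theorem Split.xA (S : Split D a b A B x y) : x ∉ A ∧ x ∉ B ∧ y ∉ A ∧ y ∉ B := by
  have h1 := S.hx
  have h2 := S.hy
  rw [S.un] at h1 h2
  tauto

theorem Split.innerW (S : Split D a b A B x y) {v : ℕ} :
    (dW D a A x).isInner v ↔ D.isInner v ∧ v ∈ A := by
  obtain ⟨x1, x2, y1, y2⟩ := S.xA
  have := S.un v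
  have hd := S.disj
  have he := S.ed
  have h1 := S.aA
  have h2 := S.bB
  have h3 := S.he
  constructor
  · rintro ⟨hv, ⟨u, hu⟩, ⟨w, hw⟩⟩
    rw [mem_dW] at hu hw
    have hvA : v ∈ A := by grind
    refine ⟨⟨by grind, ⟨u, ?_⟩, ?_⟩, hvA⟩
    · grind
    · rcases hw with ⟨rfl, _⟩ | hw
      · exact ⟨b, h3⟩
      · exact ⟨w, hw.1⟩
  · rintro ⟨⟨hv, ⟨u, hu⟩, ⟨w, hw⟩⟩, hA⟩
    refine ⟨by simp [dW, hA], ⟨u, ?_⟩, ?_⟩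
    · rw [mem_dW]; have := he _ _ hu; grind
    · rcases he _ _ hw with ⟨rfl, rfl⟩ | h | h
      · exact ⟨x, mem_dW.2 (Or.inl ⟨rfl, rfl⟩)⟩
      · exact ⟨w, mem_dW.2 (Or.inr ⟨hw, h⟩)⟩
      · exact absurd h.1 (hd _ hA)

theorem Split.innerE (S : Split D a b A B x y) {v : ℕ} :
    (dE D b B y).isInner v ↔ D.isInner v ∧ v ∈ B := by
  obtain ⟨x1, x2, y1, y2⟩ := S.xA
  have := S.un v
  have hd := S.disj
  have he := S.ed
  have h1 := S.aA
  have h2 := S.bB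
  have h3 := S.he
  constructor
  · rintro ⟨hv, ⟨u, hu⟩, ⟨w, hw⟩⟩
    rw [mem_dE] at hu hw
    have hvA : v ∈ B := by grind
    refine ⟨⟨by grind, ?_, ⟨w, ?_⟩⟩, hvA⟩
    · rcases hu with ⟨_, rfl⟩ | hu
      · exact ⟨a, h3⟩
      · exact ⟨u, hu.1⟩
    · grind
  · rintro ⟨⟨hv, ⟨u, hu⟩, ⟨w, hw⟩⟩, hA⟩
    refine ⟨by simp [dE, hA], ?_, ⟨w, ?_⟩⟩
    · rcases he _ _ hu with ⟨rfl, rfl⟩ | h | h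
      · exact ⟨y, mem_dE.2 (Or.inl ⟨rfl, rfl⟩)⟩
      · exact absurd hA (hd _ h.2)
      · exact ⟨u, mem_dE.2 (Or.inr ⟨hu, h⟩)⟩
    · rw [mem_dE]; have := he _ _ hw; grind

theorem Split.halfW {L : Lab} (S : Split D a b A B x y) (hP : TP D L) :
    Half D L (dW D a A x) (newLbl L (a, b) (a, x)) (sub1 x b) := by
  obtain ⟨x1, x2, y1, y2⟩ := S.xA
  have hd := S.disj
  have hed := S.ed
  have h1 := S.aA
  have h2 := S.bB
  have h3 := S.he
  have fix : ∀ v ∈ A, sub1 x b v = v := by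
    intro v hv; unfold sub1; grind
  have fx : sub1 x b x = b := by simp [sub1]
  refine ⟨?_, ?_, ?_, ?_, ?_⟩
  · rintro ⟨u, v⟩ h
    rw [mem_dW] at h
    rcases h with ⟨rfl, rfl⟩ | h
    · simpa [ph, fix _ h1, fx] using h3
    · simpa [ph, fix _ h.2.1, fix _ h.2.2] using h.1
  · rintro ⟨u, v⟩ h ⟨u', v'⟩ h'
    rw [mem_dW] at h h'
    simp only [ph, sub1, Prod.mk.injEq]
    grind
  · intro v hv
    rw [S.innerW] at hv
    exact ⟨hv.1, fix _ hv.2⟩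
  · intro v hv Y X
    rw [S.innerW] at hv
    unfold newLbl
    have hp := hP.prop v hv.1 Y
    split_ifs with hc
    · rw [hc]; simp [ph, fix _ h1, fx]
    · cases X
      · have := hed _ _ hp.1
        have hm := S.un
        rcases hL : L v Y XDir.W with ⟨u, w⟩
        rw [hL] at this hp hc
        simp only [ph, Prod.mk.injEq]
        have h4 : u ∈ A ∧ w ∈ A := by grind
        exact ⟨fix _ h4.1, fix _ h4.2⟩
      · have := hed _ _ hp.2.2.1
        have hm := S.un
        rcases hL : L v Y XDir.E with ⟨u, w⟩
        rw [hL] at this hp hc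
        simp only [ph, Prod.mk.injEq]
        have h4 : u ∈ A ∧ w ∈ A := by grind
        exact ⟨fix _ h4.1, fix _ h4.2⟩
  · intro v hv Y
    rw [S.innerW] at hv
    unfold newLbl
    have hp := hP.prop v hv.1 Y
    have e1 := hed _ _ hp.1
    have e2 := hed _ _ hp.2.2.1
    rcases hL : L v Y XDir.W with ⟨u, w⟩
    rcases hL' : L v Y XDir.E with ⟨u', w'⟩
    rw [hL, hL'] at hp
    rw [hL] at e1
    rw [hL'] at e2
    have := hd v hv.2
    split_ifs <;> simp only [mem_dW] <;> grind

theorem Split.halfE {L : Lab} (S : Split D a b A B x y) (hP : TP D L) :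
    Half D L (dE D b B y) (newLbl L (a, b) (y, b)) (sub1 y a) := by
  obtain ⟨x1, x2, y1, y2⟩ := S.xA
  have hd := S.disj
  have hed := S.ed
  have h1 := S.aA
  have h2 := S.bB
  have h3 := S.he
  have fix : ∀ v ∈ B, sub1 y a v = v := by
    intro v hv; unfold sub1; grind
  have fx : sub1 y a y = a := by simp [sub1]
  refine ⟨?_, ?_, ?_, ?_, ?_⟩
  · rintro ⟨u, v⟩ h
    rw [mem_dE] at h
    rcases h with ⟨rfl, rfl⟩ | h
    · simpa [ph, fix _ h2, fx] using h3
    · simpa [ph, fix _ h.2.1, fix _ h.2.2] using h.1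
  · rintro ⟨u, v⟩ h ⟨u', v'⟩ h'
    rw [mem_dE] at h h'
    simp only [ph, sub1, Prod.mk.injEq]
    grind
  · intro v hv
    rw [S.innerE] at hv
    exact ⟨hv.1, fix _ hv.2⟩
  · intro v hv Y X
    rw [S.innerE] at hv
    unfold newLbl
    have hp := hP.prop v hv.1 Y
    split_ifs with hc
    · rw [hc]; simp [ph, fix _ h2, fx]
    · cases X
      · have := hed _ _ hp.1
        have hm := S.un
        rcases hL : L v Y XDir.W with ⟨u, w⟩
        rw [hL] at this hp hc
        simp only [ph, Prod.mk.injEq]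
        have h4 : u ∈ B ∧ w ∈ B := by grind
        exact ⟨fix _ h4.1, fix _ h4.2⟩
      · have := hed _ _ hp.2.2.1
        have hm := S.un
        rcases hL : L v Y XDir.E with ⟨u, w⟩
        rw [hL] at this hp hc
        simp only [ph, Prod.mk.injEq]
        have h4 : u ∈ B ∧ w ∈ B := by grind
        exact ⟨fix _ h4.1, fix _ h4.2⟩
  · intro v hv Y
    rw [S.innerE] at hv
    unfold newLbl
    have hp := hP.prop v hv.1 Y
    have e1 := hed _ _ hp.1
    have e2 := hed _ _ hp.2.2.1
    rcases hL : L v Y XDir.W with ⟨u, w⟩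
    rcases hL' : L v Y XDir.E with ⟨u', w'⟩
    rw [hL, hL'] at hp
    rw [hL] at e1
    rw [hL'] at e2
    have := hd v
    split_ifs <;> simp only [mem_dE] <;> grind

theorem Split.wW (S : Split D a b A B x y) {v : ℕ} :
    (dW D a A x).isWVert v ↔ D.isWVert v ∧ v ∈ A := by
  obtain ⟨x1, x2, y1, y2⟩ := S.xA
  have hu := S.un
  have hd := S.disj
  have hed := S.ed
  have h1 := S.aA
  have h2 := S.bB
  unfold DG.isWVert
  simp only [mem_dW]
  simp only [dW, Finset.mem_insert]
  constructor
  · rintro ⟨h, h'⟩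
    have hA : v ∈ A := by grind
    refine ⟨⟨by grind, fun u hu => ?_⟩, hA⟩
    have := hed _ _ hu
    grind
  · rintro ⟨⟨h, h'⟩, hA⟩
    refine ⟨by grind, fun u => ?_⟩
    grind

theorem Split.eE (S : Split D a b A B x y) {v : ℕ} :
    (dE D b B y).isEVert v ↔ D.isEVert v ∧ v ∈ B := by
  obtain ⟨x1, x2, y1, y2⟩ := S.xA
  have hu := S.un
  have hd := S.disj
  have hed := S.ed
  have h1 := S.aA
  have h2 := S.bB
  unfold DG.isEVert
  simp only [mem_dE]
  simp only [dE, Finset.mem_insert]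
  constructor
  · rintro ⟨h, h'⟩
    have hA : v ∈ B := by grind
    refine ⟨⟨by grind, fun u hu => ?_⟩, hA⟩
    have := hed _ _ hu
    grind
  · rintro ⟨⟨h, h'⟩, hA⟩
    refine ⟨by grind, fun u => ?_⟩
    grind

theorem Split.wE (S : Split D a b A B x y) {v : ℕ} :
    (dE D b B y).isWVert v ↔ v = y ∨ (D.isWVert v ∧ v ∈ B) := by
  obtain ⟨x1, x2, y1, y2⟩ := S.xA
  have hu := S.un
  have hd := S.disj
  have hed := S.ed
  have h1 := S.aA
  have h2 := S.bB
  have h3 := S.he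
  unfold DG.isWVert
  simp only [mem_dE]
  simp only [dE, Finset.mem_insert]
  constructor
  · rintro ⟨h, h'⟩
    by_cases hv : v = y
    · exact Or.inl hv
    have hA : v ∈ B := by grind
    refine Or.inr ⟨⟨by grind, fun u hu => ?_⟩, hA⟩
    have := hed _ _ hu
    grind
  · rintro (rfl | ⟨⟨h, h'⟩, hA⟩)
    · grind
    refine ⟨by grind, fun u => ?_⟩
    grind

theorem Split.eW (S : Split D a b A B x y) {v : ℕ} :
    (dW D a A x).isEVert v ↔ v = x ∨ (D.isEVert v ∧ v ∈ A) := by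
  obtain ⟨x1, x2, y1, y2⟩ := S.xA
  have hu := S.un
  have hd := S.disj
  have hed := S.ed
  have h1 := S.aA
  have h2 := S.bB
  have h3 := S.he
  unfold DG.isEVert
  simp only [mem_dW]
  simp only [dW, Finset.mem_insert]
  constructor
  · rintro ⟨h, h'⟩
    by_cases hv : v = x
    · exact Or.inl hv
    have hA : v ∈ A := by grind
    refine Or.inr ⟨⟨by grind, fun u hu => ?_⟩, hA⟩
    have := hed _ _ hu
    grind
  · rintro (rfl | ⟨⟨h, h'⟩, hA⟩)
    · grind
    refine ⟨by grind, fun u => ?_⟩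
    grind

theorem conn_of_center {D' : DG} {c : ℕ} (h : ∀ u ∈ D'.verts, ReflTransGen D'.semiAdj c u) :
    ∀ u ∈ D'.verts, ∀ v ∈ D'.verts, ReflTransGen D'.semiAdj u v :=
  fun u hu v hv => (rtg_symm (h u hu)).trans (h v hv)

theorem Split.tpW {L : Lab} (S : Split D a b A B x y) (hP : TP D L) :
    TP (dW D a A x) (newLbl L (a, b) (a, x)) := by
  obtain ⟨x1, x2, y1, y2⟩ := S.xA
  have hd := S.disj
  have hed := S.ed
  have h1 := S.aA
  have h2 := S.bB
  have h3 := S.he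
  refine (S.halfW hP).tp hP ?_ (conn_of_center (c := a) ?_) ?_ ?_ ⟨a, S.innerW.2 ⟨S.ia, S.aA⟩⟩
  · rintro ⟨u, v⟩ h
    rw [mem_dW] at h
    simp only [dW, Finset.mem_insert]
    grind
  · have key : ∀ u, ReflTransGen (D.del (a, b)).semiAdj a u →
        u ∈ A ∧ ReflTransGen (dW D a A x).semiAdj a u := by
      intro u hu
      induction hu with
      | refl => exact ⟨h1, .refl⟩
      | @tail u v r huv ih =>
        have hv : v ∈ A ∧ (dW D a A x).semiAdj u v := by
          simp only [DG.semiAdj, mem_dW]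
          simp only [DG.semiAdj, DG.del, Finset.mem_erase] at huv
          have := hed u v
          have := hed v u
          have := hd u ih.1
          grind
        exact ⟨hv.1, ih.2.tail hv.2⟩
    intro u hu
    simp only [dW, Finset.mem_insert] at hu
    rcases hu with rfl | hu
    · exact .single (Or.inl (mem_dW.2 (Or.inl ⟨rfl, rfl⟩)))
    · exact (key u (S.cA u hu)).2
  · rintro ⟨u, v⟩ h ⟨u', v'⟩ h' hw (rfl : u' = u)
    rw [mem_dW] at h h'
    rw [S.wW] at hw
    have := hP.fw (u', v)
    have ha : u' ≠ a := by
      rintro rfl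
      obtain ⟨_, ⟨c, hc⟩, _⟩ := S.ia
      exact hw.1.2 _ hc
    exact hP.fw (u', v) (by grind) _ (by grind) hw.1 rfl
  · rintro ⟨u, v⟩ h ⟨u', v'⟩ h' hw (rfl : v' = v)
    rw [mem_dW] at h h'
    rw [S.eW] at hw
    by_cases hx : v' = x
    · grind
    · exact hP.fe (u, v') (by grind) _ (by grind) (by grind) rfl

theorem Split.tpE {L : Lab} (S : Split D a b A B x y) (hP : TP D L) :
    TP (dE D b B y) (newLbl L (a, b) (y, b)) := by
  obtain ⟨x1, x2, y1, y2⟩ := S.xA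
  have hd := S.disj
  have hed := S.ed
  have h1 := S.aA
  have h2 := S.bB
  have h3 := S.he
  refine (S.halfE hP).tp hP ?_ (conn_of_center (c := b) ?_) ?_ ?_ ⟨b, S.innerE.2 ⟨S.ib, S.bB⟩⟩
  · rintro ⟨u, v⟩ h
    rw [mem_dE] at h
    simp only [dE, Finset.mem_insert]
    grind
  · have key : ∀ u, ReflTransGen (D.del (a, b)).semiAdj b u →
        u ∈ B ∧ ReflTransGen (dE D b B y).semiAdj b u := by
      intro u hu
      induction hu with
      | refl => exact ⟨h2, .refl⟩
      | @tail u v r huv ih =>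
        have hv : v ∈ B ∧ (dE D b B y).semiAdj u v := by
          simp only [DG.semiAdj, mem_dE]
          simp only [DG.semiAdj, DG.del, Finset.mem_erase] at huv
          have := hed u v
          have := hed v u
          have := hd u
          grind
        exact ⟨hv.1, ih.2.tail hv.2⟩
    intro u hu
    simp only [dE, Finset.mem_insert] at hu
    rcases hu with rfl | hu
    · exact .single (Or.inr (mem_dE.2 (Or.inl ⟨rfl, rfl⟩)))
    · exact (key u (S.cB u hu)).2
  · rintro ⟨u, v⟩ h ⟨u', v'⟩ h' hw (rfl : u' = u)
    rw [mem_dE] at h h'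
    rw [S.wE] at hw
    by_cases hx : u' = y
    · grind
    · exact hP.fw (u', v) (by grind) _ (by grind) (by grind) rfl
  · rintro ⟨u, v⟩ h ⟨u', v'⟩ h' hw (rfl : v' = v)
    rw [mem_dE] at h h'
    rw [S.eE] at hw
    have ha : v' ≠ b := by
      rintro rfl
      obtain ⟨_, _, ⟨c, hc⟩⟩ := S.ib
      exact hw.1.2 _ hc
    exact hP.fe (u, v') (by grind) _ (by grind) hw.1 rfl

theorem Half.card {D L D' L' ψ} (H : Half D L D' L' ψ) {g} (hg : g ∈ D.edges)
    (hn : ∀ k ∈ D'.edges, ph ψ k ≠ g) : D'.edges.card < D.edges.card := by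
  classical
  have : (D'.edges.image (ph ψ)).card = D'.edges.card :=
    Finset.card_image_of_injOn (fun k hk l hl h => H.inj k hk l hl h)
  rw [← this]
  apply Finset.card_lt_card
  rw [Finset.ssubset_iff_of_subset]
  · refine ⟨g, hg, ?_⟩
    simp only [Finset.mem_image, not_exists, not_and]
    exact hn
  · intro k hk
    obtain ⟨l, hl, rfl⟩ := Finset.mem_image.1 hk
    exact H.map l hl

theorem Split.cardW {L : Lab} (S : Split D a b A B x y) (hP : TP D L) :
    (dW D a A x).edges.card < D.edges.card := by
  obtain ⟨_, _, ⟨c, hc⟩⟩ := S.ib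
  refine (S.halfW hP).card hc ?_
  rintro ⟨u, v⟩ hk
  rw [mem_dW] at hk
  have := S.disj
  have h2 := S.bB
  have h1 := S.aA
  have := S.xA
  simp only [ph, sub1, ne_eq, Prod.mk.injEq]
  grind

theorem Split.cardE {L : Lab} (S : Split D a b A B x y) (hP : TP D L) :
    (dE D b B y).edges.card < D.edges.card := by
  obtain ⟨_, ⟨c, hc⟩, _⟩ := S.ia
  refine (S.halfE hP).card hc ?_
  rintro ⟨u, v⟩ hk
  rw [mem_dE] at hk
  have := S.disj
  have h2 := S.bB
  have h1 := S.aA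
  have := S.xA
  simp only [ph, sub1, ne_eq, Prod.mk.injEq]
  grind

theorem Split.cut_eq (S : Split D a b A B x y) :
    D = DG.cut (dW D a A x) (dE D b B y) (a, x) (y, b) := by
  obtain ⟨x1, x2, y1, y2⟩ := S.xA
  have hd := S.disj
  have hed := S.ed
  have h1 := S.aA
  have h2 := S.bB
  have h3 := S.he
  have hu := S.un
  have e1 : D.verts = (DG.cut (dW D a A x) (dE D b B y) (a, x) (y, b)).verts := by
    ext v
    simp only [DG.cut, dW, dE, Finset.mem_sdiff, Finset.mem_union, Finset.mem_insert,
      Finset.mem_singleton, hu]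
    grind
  have e2 : D.edges = (DG.cut (dW D a A x) (dE D b B y) (a, x) (y, b)).edges := by
    ext ⟨u, v⟩
    have := hed u v
    simp only [DG.cut, Finset.mem_union, Finset.mem_insert, Finset.mem_erase, mem_dW, mem_dE]
    grind
  rcases D with ⟨V, E⟩
  exact congrArg₂ DG.mk e1 e2

end

structure Res (D : DG) (L : Lab) (G : CTree) : Prop where
  con : IsConstruction G
  root : G.rootGraph = D
  lam : ∀ a, D.isInner a → ∀ (Y : YDir) (X : XDir), lamG G a Y X = L a Y X
  gW : ∀ Y f, goodW D L Y f → f = G.dist Y XDir.W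
  gE : ∀ Y f, goodE D L Y f → f = G.dist Y XDir.E
  wW : ∀ Y, D.isWEdge (G.dist Y XDir.W)
  eE : ∀ Y, D.isEEdge (G.dist Y XDir.E)
  pth : ∀ Y, ER D (G.dist Y XDir.W) (G.dist Y XDir.E)

theorem base_case {D : DG} {L : Lab} (hP : TP D L)
    (hno : ∀ a b, (a, b) ∈ D.edges → D.isInner a → D.isInner b → False) :
    ∃ G, Res D L G := by
  obtain ⟨b, hb⟩ := hP.inn
  have nl : ∀ u, (u, u) ∉ D.edges := fun u hu => hP.br _ hu .refl
  have nW : ∀ v, (v, b) ∈ D.edges → D.isWVert v := by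
    intro v hv
    refine ⟨(hP.vm _ hv).1, fun u hu => hno v b hv ⟨(hP.vm _ hv).1, ⟨u, hu⟩, ⟨b, hv⟩⟩ hb⟩
  have nE : ∀ v, (b, v) ∈ D.edges → D.isEVert v := by
    intro v hv
    refine ⟨(hP.vm _ hv).2, fun u hu => hno b v hv hb ⟨(hP.vm _ hv).2, ⟨b, hv⟩, ⟨u, hu⟩⟩⟩
  have fW : ∀ v u, (v, b) ∈ D.edges → (v, u) ∈ D.edges → u = b := by
    intro v u h1 h2
    have := hP.fw _ h1 _ h2 (nW v h1) rfl
    simpa using this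
  have fE : ∀ v u, (b, v) ∈ D.edges → (u, v) ∈ D.edges → u = b := by
    intro v u h1 h2
    have := hP.fe _ h1 _ h2 (nE v h1) rfl
    simpa using this
  have adj : ∀ v ∈ D.verts, v = b ∨ (v, b) ∈ D.edges ∨ (b, v) ∈ D.edges := by
    intro v hv
    have := hP.conn b hb.1 v hv
    clear hv
    induction this with
    | refl => exact Or.inl rfl
    | @tail u w _ h2 ih =>
      rcases ih with rfl | h | h
      · exact Or.inr h2.symm
      · rcases h2 with h2 | h2
        · exact Or.inl (fW _ _ h h2)
        · exact absurd h2 ((nW _ h).2 _)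
      · rcases h2 with h2 | h2
        · exact absurd h2 ((nE _ h).2 _)
        · exact Or.inl (fE _ _ h h2)
  have inc : ∀ e ∈ D.edges, e.1 = b ∨ e.2 = b := by
    rintro ⟨u, v⟩ he
    rcases adj u (hP.vm _ he).1 with h | h | h
    · exact Or.inl h
    · exact Or.inr (fW _ _ h he)
    · exact absurd he ((nE _ h).2 _)
  have anti : ∀ a b : ℕ, (a, b) ∈ D.edges → (b, a) ∉ D.edges := by
    intro u v h1 h2
    refine hP.br _ h1 (.single (Or.inr (Finset.mem_erase.2 ⟨?_, h2⟩)))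
    simp only [ne_eq, Prod.mk.injEq, not_and]
    rintro rfl
    exact absurd h1 (nl _)
  have pb := hP.prop b hb
  refine ⟨.leaf D (L b), ?_⟩
  constructor
  · refine .leaf _ _ ⟨⟨hP.vm, ?_, anti, ⟨b, hb.1⟩⟩, b, hb.1, inc, adj, hb.2.1, hb.2.2, pb, ?_, ?_⟩
    · rintro ⟨u, v⟩ he (rfl : u = v)
      exact nl _ he
    · intro hc
      obtain ⟨g, hg, h, hh, hne⟩ := Finset.one_lt_card.1 hc
      rw [Finset.mem_filter] at hg hh
      exact hP.sepW b hb g hg.1 h hh.1 hg.2 hh.2 hne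
    · intro hc
      obtain ⟨g, hg, h, hh, hne⟩ := Finset.one_lt_card.1 hc
      rw [Finset.mem_filter] at hg hh
      exact hP.sepE b hb g hg.1 h hh.1 hg.2 hh.2 hne
  · rfl
  · intro a ha Y X
    have : a = b := by
      rcases adj a ha.1 with h | h | h
      · exact h
      · exact (hno a b h ha hb).elim
      · exact (hno b a h hb ha).elim
    rw [this]; rfl
  · intro Y f ⟨⟨hf, hw⟩, hg⟩
    have h2 : f.2 = b := by
      rcases inc f hf with h | h
      · obtain ⟨_, ⟨c, hc⟩, _⟩ := hb
        rw [h] at hw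
        exact absurd hc (hw.2 c)
      · exact h
    have := hg f hf .refl (h2 ▸ hb)
    rw [h2] at this
    exact this.symm
  · intro Y f ⟨⟨hf, hw⟩, hg⟩
    have h2 : f.1 = b := by
      rcases inc f hf with h | h
      · exact h
      · obtain ⟨_, _, ⟨c, hc⟩⟩ := hb
        rw [h] at hw
        exact absurd hc (hw.2 c)
    have := hg f hf .refl (h2 ▸ hb)
    rw [h2] at this
    exact this.symm
  · intro Y
    refine ⟨(pb Y).1, nW _ ?_⟩
    have := (pb Y).1
    rwa [← Prod.mk.eta (p := L b Y XDir.W), (pb Y).2.1] at this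
  · intro Y
    refine ⟨(pb Y).2.2.1, nE _ ?_⟩
    have := (pb Y).2.2.1
    rwa [← Prod.mk.eta (p := L b Y XDir.E), (pb Y).2.2.2] at this
  · intro Y
    exact .single ⟨(pb Y).2.2.1, (pb Y).2.1.trans (pb Y).2.2.2.symm⟩

section
variable {D : DG} {a b x y : ℕ} {A B : Finset ℕ}

theorem Split.phW (S : Split D a b A B x y) : ph (sub1 x b) (a, x) = (a, b) := by
  have h1 := S.aA
  have := S.xA
  simp only [ph, sub1, Prod.mk.injEq]
  grind

theorem Split.phE (S : Split D a b A B x y) : ph (sub1 y a) (y, b) = (a, b) := by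
  have h1 := S.bB
  have := S.xA
  simp only [ph, sub1, Prod.mk.injEq]
  grind

theorem Split.phWA (S : Split D a b A B x y) {f : ℕ × ℕ} (h1 : f.1 ∈ A) (h2 : f.2 ∈ A) :
    ph (sub1 x b) f = f := by
  have := S.xA
  rcases f with ⟨u, v⟩
  simp only [ph, sub1, Prod.mk.injEq]
  grind

theorem Split.phEB (S : Split D a b A B x y) {f : ℕ × ℕ} (h1 : f.1 ∈ B) (h2 : f.2 ∈ B) :
    ph (sub1 y a) f = f := by
  have := S.xA
  rcases f with ⟨u, v⟩
  simp only [ph, sub1, Prod.mk.injEq]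
  grind

theorem Split.memW (S : Split D a b A B x y) : (a, x) ∈ (dW D a A x).edges :=
  mem_dW.2 (Or.inl ⟨rfl, rfl⟩)

theorem Split.memE (S : Split D a b A B x y) : (y, b) ∈ (dE D b B y).edges :=
  mem_dE.2 (Or.inl ⟨rfl, rfl⟩)

theorem Split.notgoodW {L : Lab} (S : Split D a b A B x y) (hP : TP D L) {Y : YDir}
    (h : ¬ goodW (dE D b B y) (newLbl L (a, b) (y, b)) Y (y, b)) :
    ∃ g ∈ D.edges, ER D (a, b) g ∧ D.isInner g.2 ∧ L g.2 Y XDir.W ≠ g := by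
  have H := S.halfE hP
  by_contra hc
  push Not at hc
  refine h ⟨⟨S.memE, S.wE.2 (Or.inl rfl)⟩, fun g hg r hi => ?_⟩
  have := H.fix _ hi
  rw [H.labW hg hi]
  refine hc _ (H.map g hg) ?_ ?_
  · have := H.er r
    rwa [S.phE] at this
  · simpa [ph, this.2] using this.1

theorem Split.notgoodE {L : Lab} (S : Split D a b A B x y) (hP : TP D L) {Y : YDir}
    (h : ¬ goodE (dW D a A x) (newLbl L (a, b) (a, x)) Y (a, x)) :
    ∃ g ∈ D.edges, ER D g (a, b) ∧ D.isInner g.1 ∧ L g.1 Y XDir.E ≠ g := by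
  have H := S.halfW hP
  by_contra hc
  push Not at hc
  refine h ⟨⟨S.memW, S.eW.2 (Or.inl rfl)⟩, fun g hg r hi => ?_⟩
  have := H.fix _ hi
  rw [H.labE hg hi]
  refine hc _ (H.map g hg) ?_ ?_
  · have := H.er r
    rwa [S.phW] at this
  · simpa [ph, this.2] using this.1

theorem Split.dich {L : Lab} (S : Split D a b A B x y) (hP : TP D L) (Y : YDir) :
    goodE (dW D a A x) (newLbl L (a, b) (a, x)) Y (a, x) ∨
    goodW (dE D b B y) (newLbl L (a, b) (y, b)) Y (y, b) := by
  by_contra hc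
  push Not at hc
  obtain ⟨g, hg, rg, ig, ng⟩ := S.notgoodE hP hc.1
  obtain ⟨h, hh, rh, ih, nh⟩ := S.notgoodW hP hc.2
  rcases hP.dec Y g hg h hh (rg.trans rh) ig ih with h | h
  · exact ng h
  · exact nh h

/-- `W`-edges of the western half. -/
theorem Split.wedgeW (S : Split D a b A B x y) {f : ℕ × ℕ} (h : (dW D a A x).isWEdge f) :
    D.isWEdge f ∧ f.1 ∈ A ∧ f.2 ∈ A := by
  obtain ⟨h1, h2⟩ := h
  rw [S.wW] at h2
  rcases f with ⟨u, v⟩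
  rw [mem_dW] at h1
  rcases h1 with ⟨rfl, rfl⟩ | h1
  · obtain ⟨_, ⟨c, hc⟩, _⟩ := S.ia
    exact absurd hc (h2.1.2 c)
  · exact ⟨⟨h1.1, h2.1⟩, h1.2⟩

theorem Split.eedgeE (S : Split D a b A B x y) {f : ℕ × ℕ} (h : (dE D b B y).isEEdge f) :
    D.isEEdge f ∧ f.1 ∈ B ∧ f.2 ∈ B := by
  obtain ⟨h1, h2⟩ := h
  rw [S.eE] at h2
  rcases f with ⟨u, v⟩
  rw [mem_dE] at h1
  rcases h1 with ⟨rfl, rfl⟩ | h1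
  · obtain ⟨_, _, ⟨c, hc⟩⟩ := S.ib
    exact absurd hc (h2.1.2 c)
  · exact ⟨⟨h1.1, h2.1⟩, h1.2⟩

theorem Split.wedgeE (S : Split D a b A B x y) {f : ℕ × ℕ} (h : (dE D b B y).isWEdge f)
    (hne : (y, b) ≠ f) : D.isWEdge f ∧ f.1 ∈ B ∧ f.2 ∈ B := by
  obtain ⟨h1, h2⟩ := h
  rw [S.wE] at h2
  rcases f with ⟨u, v⟩
  rw [mem_dE] at h1
  have := S.xA
  simp only [DG.isWEdge]
  grind

theorem Split.eedgeW (S : Split D a b A B x y) {f : ℕ × ℕ} (h : (dW D a A x).isEEdge f)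
    (hne : (a, x) ≠ f) : D.isEEdge f ∧ f.1 ∈ A ∧ f.2 ∈ A := by
  obtain ⟨h1, h2⟩ := h
  rw [S.eW] at h2
  rcases f with ⟨u, v⟩
  rw [mem_dW] at h1
  have := S.xA
  simp only [DG.isEEdge]
  grind

theorem Split.wcase (S : Split D a b A B x y) {f : ℕ × ℕ} (h : D.isWEdge f) :
    ((dW D a A x).isWEdge f ∧ f.1 ∈ A ∧ f.2 ∈ A) ∨
    ((dE D b B y).isWEdge f ∧ f.1 ∈ B ∧ f.2 ∈ B) := by
  obtain ⟨h1, h2⟩ := h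
  rcases f with ⟨u, v⟩
  simp only [DG.isWEdge, S.wW, S.wE, mem_dW, mem_dE]
  rcases S.ed _ _ h1 with ⟨rfl, rfl⟩ | h | h
  · obtain ⟨_, ⟨c, hc⟩, _⟩ := S.ia
    exact absurd hc (h2.2 c)
  · exact Or.inl ⟨⟨Or.inr ⟨h1, h⟩, h2, h.1⟩, h⟩
  · exact Or.inr ⟨⟨Or.inr ⟨h1, h⟩, Or.inr ⟨h2, h.1⟩⟩, h⟩

theorem Split.ecase (S : Split D a b A B x y) {f : ℕ × ℕ} (h : D.isEEdge f) :
    ((dW D a A x).isEEdge f ∧ f.1 ∈ A ∧ f.2 ∈ A) ∨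
    ((dE D b B y).isEEdge f ∧ f.1 ∈ B ∧ f.2 ∈ B) := by
  obtain ⟨h1, h2⟩ := h
  rcases f with ⟨u, v⟩
  simp only [DG.isEEdge, S.eW, S.eE, mem_dW, mem_dE]
  rcases S.ed _ _ h1 with ⟨rfl, rfl⟩ | h | h
  · obtain ⟨_, _, ⟨c, hc⟩⟩ := S.ib
    exact absurd hc (h2.2 c)
  · exact Or.inl ⟨⟨Or.inr ⟨h1, h⟩, Or.inr ⟨h2, h.2⟩⟩, h⟩
  · exact Or.inr ⟨⟨Or.inr ⟨h1, h⟩, h2, h.2⟩, h⟩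

end

theorem Half.goodW {D L D' L' ψ} (H : Half D L D' L' ψ) {Y f} (hf : D'.isWEdge f)
    (hp : ph ψ f = f) (hg : goodW D L Y f) : goodW D' L' Y f := by
  refine ⟨hf, fun g h r hi => ?_⟩
  rw [H.labW h hi]
  have := H.fix _ hi
  refine hg.2 _ (H.map g h) ?_ ?_
  · have := H.er r
    rwa [hp] at this
  · simpa [ph, this.2] using this.1

theorem Half.goodE {D L D' L' ψ} (H : Half D L D' L' ψ) {Y f} (hf : D'.isEEdge f)
    (hp : ph ψ f = f) (hg : goodE D L Y f) : goodE D' L' Y f := by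
  refine ⟨hf, fun g h r hi => ?_⟩
  rw [H.labE h hi]
  have := H.fix _ hi
  refine hg.2 _ (H.map g h) ?_ ?_
  · have := H.er r
    rwa [hp] at this
  · simpa [ph, this.2] using this.1

theorem mk_distW (GW GE : CTree) (eW eE : ℕ × ℕ) (Y : YDir) :
    (mkNode GW GE eW eE).dist Y XDir.W =
      if eE = GE.dist Y XDir.W then GW.dist Y XDir.W else GE.dist Y XDir.W := rfl

theorem mk_distE (GW GE : CTree) (eW eE : ℕ × ℕ) (Y : YDir) :
    (mkNode GW GE eW eE).dist Y XDir.E =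
      if eW = GW.dist Y XDir.E then GE.dist Y XDir.E else GW.dist Y XDir.E := rfl

theorem node_case {D : DG} {L : Lab} {a b x y : ℕ} {A B : Finset ℕ}
    (S : Split D a b A B x y) (hP : TP D L) {GW GE : CTree}
    (RW : Res (dW D a A x) (newLbl L (a, b) (a, x)) GW)
    (RE : Res (dE D b B y) (newLbl L (a, b) (y, b)) GE) :
    Res D L (mkNode GW GE (a, x) (y, b)) := by
  have HW := S.halfW hP
  have HE := S.halfE hP
  obtain ⟨x1, x2, y1, y2⟩ := S.xA
  have hXYC : ∀ Y : YDir, (a, x) = GW.dist Y XDir.E ∨ (y, b) = GE.dist Y XDir.W :=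
    fun Y => (S.dich hP Y).imp (RW.gE Y _) (RE.gW Y _)
  have pW : ∀ Y, ER D (GW.dist Y XDir.W) (ph (sub1 x b) (GW.dist Y XDir.E)) := by
    intro Y
    have := HW.er (RW.pth Y)
    obtain ⟨_, h1, h2⟩ := S.wedgeW (RW.wW Y)
    rwa [S.phWA h1 h2] at this
  have pE : ∀ Y, ER D (ph (sub1 y a) (GE.dist Y XDir.W)) (GE.dist Y XDir.E) := by
    intro Y
    have := HE.er (RE.pth Y)
    obtain ⟨_, h1, h2⟩ := S.eedgeE (RE.eE Y)
    rwa [S.phEB h1 h2] at this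
  constructor
  · refine .node _ _ _ _ _ _ RW.con RE.con ?_ ?_ ?_ rfl hXYC (fun _ => rfl) (fun _ => rfl)
    · rw [RW.root, RE.root, Finset.disjoint_left]
      have h1 := S.disj
      have h2 := S.xy
      simp only [dW, dE, Finset.mem_insert]
      grind
    · rw [RW.root]
      refine ⟨⟨S.memW, S.eW.2 (Or.inl rfl)⟩, fun c hc => ?_⟩
      rw [mem_dW] at hc
      grind
    · rw [RE.root]
      refine ⟨⟨S.memE, S.wE.2 (Or.inl rfl)⟩, fun c hc => ?_⟩
      rw [mem_dE] at hc
      grind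
  · show DG.cut GW.rootGraph GE.rootGraph (a, x) (y, b) = D
    rw [RW.root, RE.root]
    exact S.cut_eq.symm
  · intro v hv Y X
    have hLe : L v Y X ∈ D.edges := by
      cases X
      · exact (hP.prop v hv Y).1
      · exact (hP.prop v hv Y).2.2.1
    have hx : L v Y X ≠ (a, x) := by
      intro h
      rw [h] at hLe
      exact S.hx (hP.vm _ hLe).2
    have hy : L v Y X ≠ (y, b) := by
      intro h
      rw [h] at hLe
      exact S.hy (hP.vm _ hLe).1
    simp only [mkNode, lamG, RW.root]
    by_cases hA : v ∈ A
    · have hm : v ∈ (dW D a A x).verts := Finset.mem_insert_of_mem hA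
      rw [if_pos hm, RW.lam v (S.innerW.2 ⟨hv, hA⟩)]
      unfold newLbl
      grind
    · have hB : v ∈ B := ((S.un v).1 hv.1).resolve_left hA
      have hm : v ∉ (dW D a A x).verts := by
        simp only [dW, Finset.mem_insert]
        grind
      rw [if_neg hm, RE.lam v (S.innerE.2 ⟨hv, hB⟩)]
      unfold newLbl
      grind
  · intro Y f hf
    simp only [mk_distW, mk_distE]
    rcases S.wcase hf.1 with ⟨h, h1, h2⟩ | ⟨h, h1, h2⟩
    · have hf' := RW.gW Y f (HW.goodW h (S.phWA h1 h2) hf)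
      split_ifs with hc
      · exact hf'
      · exfalso
        have hng : ¬ goodW (dE D b B y) (newLbl L (a, b) (y, b)) Y (y, b) :=
          fun k => hc (RE.gW Y _ k)
        obtain ⟨g, hg, rg, ig, ng⟩ := S.notgoodW hP hng
        have := pW Y
        rw [← (hXYC Y).resolve_right hc, S.phW, ← hf'] at this
        exact ng (hf.2 g hg (this.trans rg) ig)
    · have hf' := RE.gW Y f (HE.goodW h (S.phEB h1 h2) hf)
      rw [← hf', if_neg]
      rintro rfl
      exact y2 h1
  · intro Y f hf
    simp only [mk_distW, mk_distE]
    rcases S.ecase hf.1 with ⟨h, h1, h2⟩ | ⟨h, h1, h2⟩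
    · have hf' := RW.gE Y f (HW.goodE h (S.phWA h1 h2) hf)
      rw [← hf', if_neg]
      rintro rfl
      exact x1 h2
    · have hf' := RE.gE Y f (HE.goodE h (S.phEB h1 h2) hf)
      split_ifs with hc
      · exact hf'
      · exfalso
        have hng : ¬ goodE (dW D a A x) (newLbl L (a, b) (a, x)) Y (a, x) :=
          fun k => hc (RW.gE Y _ k)
        obtain ⟨g, hg, rg, ig, ng⟩ := S.notgoodE hP hng
        have := pE Y
        rw [← (hXYC Y).resolve_left hc, S.phE, ← hf'] at this
        exact ng (hf.2 g hg (ReflTransGen.trans rg this) ig)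
  · intro Y
    simp only [mk_distW, mk_distE]
    split_ifs with hc
    · exact (S.wedgeW (RW.wW Y)).1
    · exact (S.wedgeE (RE.wW Y) hc).1
  · intro Y
    simp only [mk_distW, mk_distE]
    split_ifs with hc
    · exact (S.eedgeE (RE.eE Y)).1
    · exact (S.eedgeW (RW.eE Y) hc).1
  · intro Y
    have h1 := pW Y
    have h2 := pE Y
    simp only [mk_distW, mk_distE]
    split_ifs with hc hc' hc'
    · rw [← hc', S.phW] at h1
      rw [← hc, S.phE] at h2
      exact ReflTransGen.trans h1 h2
    · obtain ⟨_, k1, k2⟩ := S.eedgeW (RW.eE Y) hc'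
      rwa [S.phWA k1 k2] at h1
    · obtain ⟨_, k1, k2⟩ := S.wedgeE (RE.wW Y) hc
      rwa [S.phEB k1 k2] at h2
    · exact absurd (hXYC Y) (by tauto)

theorem main_ind (n : ℕ) : ∀ (D : DG) (L : Lab), TP D L → D.edges.card < n → ∃ G, Res D L G := by
  induction n with
  | zero => intro D L _ h; omega
  | succ n ih =>
    intro D L hP hn
    by_cases hno : ∀ a b, (a, b) ∈ D.edges → D.isInner a → D.isInner b → False
    · exact base_case hP hno
    · push Not at hno
      obtain ⟨a, b, he, ia, ib, -⟩ := hno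
      obtain ⟨A, B, x, y, S⟩ := exists_split hP he ia ib
      obtain ⟨GW, RW⟩ := ih _ _ (S.tpW hP) (lt_of_lt_of_le (S.cardW hP) (by omega))
      obtain ⟨GE, RE⟩ := ih _ _ (S.tpE hP) (lt_of_lt_of_le (S.cardE hP) (by omega))
      exact ⟨_, node_case S hP RW RE⟩

theorem no_closing {D : DG} (hA : D.Asemicyclic) (v : ℕ) (l : List ℕ)
    (hm : ∀ u ∈ v :: l, u ∈ D.verts) (hn : (v :: l).Nodup)
    (hc : (v :: l).IsChain D.semiAdj) (hl : 2 ≤ l.length)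
    (hlast : ∀ w, (v :: l).getLast? = some w → D.semiAdj w v) : False := by
  refine hA ((v :: l) ++ [v]) ⟨by simp; omega, ?_, ?_, ?_, ?_⟩
  · intro u hu
    rcases List.mem_append.1 hu with h | h
    · exact hm u h
    · exact hm u (by simp at h; simp [h])
  · simp [List.getLast?_cons]
  · rw [List.dropLast_concat]; exact hn
  · show List.IsChain _ _
    rw [List.isChain_append]
    refine ⟨hc, by simp, ?_⟩
    intro u hu w hw
    simp at hw
    subst hw
    exact hlast u hu

theorem walk_path {D : DG} (ho : D.IsOriented) (hA : D.Asemicyclic) {g h : ℕ × ℕ}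
    (hg : g ∈ D.edges) (r : ER D g h) :
    ∃ l : List ℕ, D.IsPath l ∧ (∃ t, l = g.1 :: g.2 :: t) ∧
      ∃ t, l = t ++ [h.1, h.2] := by
  induction r with
  | refl =>
    refine ⟨[g.1, g.2], ⟨by simp, ?_, ?_, ?_⟩, ⟨[], rfl⟩, ⟨[], rfl⟩⟩
    · have := ho.1 g hg
      simp [this.1, this.2]
    · simpa using ho.2.1 g hg
    · show List.IsChain _ _
      simpa using hg
  | @tail h k _ hk ih =>
    obtain ⟨l, ⟨l1, l2, l3, l4⟩, ⟨t, ht⟩, ⟨s, hs⟩⟩ := ih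
    have hkm := ho.1 k hk.1
    have hlast : l.getLast? = some k.1 := by rw [hs]; simp [hk.2]
    have hnot : k.2 ∉ l := by
      intro hmem
      obtain ⟨p, q, hpq⟩ := List.append_of_mem hmem
      have hq : (k.2 :: q).getLast? = some k.1 := by
        rw [hpq, List.getLast?_append] at hlast
        simpa [List.getLast?_cons] using hlast
      have l4' : (k.2 :: q).IsChain (fun a b => (a, b) ∈ D.edges) := by
        have : l.IsChain (fun a b => (a, b) ∈ D.edges) := l4
        rw [hpq, List.isChain_append] at this
        exact this.2.1
      refine no_closing hA k.2 q ?_ ?_ (l4'.imp fun _ _ h => Or.inl h) ?_ ?_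
      · intro u hu
        exact l2 u (by rw [hpq]; exact List.mem_append_right _ hu)
      · rw [hpq] at l3
        exact l3.of_append_right
      · rcases q with _ | ⟨c, _ | ⟨d, q⟩⟩
        · simp at hq
          exact absurd hq.symm (ho.2.1 k hk.1)
        · simp at hq
          simp at l4'
          rw [hq] at l4'
          exact absurd l4' (ho.2.2.1 _ _ hk.1)
        · simp
      · intro w hw
        rw [hq] at hw
        simp at hw
        subst hw
        exact Or.inl hk.1
    refine ⟨l ++ [k.2], ⟨by simp, ?_, ?_, ?_⟩, ⟨t ++ [k.2], by simp [ht]⟩,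
      ⟨s ++ [h.1], by simp [hs, hk.2]⟩⟩
    · intro u hu
      rcases List.mem_append.1 hu with h | h
      · exact l2 u h
      · simp at h; rw [h]; exact hkm.2
    · rw [List.nodup_append]
      refine ⟨l3, by simp, ?_⟩
      intro u hu w hw
      simp at hw
      subst hw
      rintro rfl
      exact hnot hu
    · show List.IsChain _ _
      rw [List.isChain_append]
      refine ⟨l4, by simp, ?_⟩
      intro u hu w hw
      rw [hlast] at hu
      simp at hu hw
      subst hu hw
      exact hk.1

theorem exists_nodup {D : DG} {u v : ℕ} (h : ReflTransGen D.semiAdj u v) :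
    ∃ l : List ℕ, (u :: l).Nodup ∧ (u :: l).IsChain D.semiAdj ∧
      (u :: l).getLast? = some v := by
  induction h using ReflTransGen.head_induction_on with
  | refl => exact ⟨[], by simp, by simp, by simp⟩
  | @head a c h1 _ ih =>
    obtain ⟨l, n, ch, la⟩ := ih
    by_cases ha : a ∈ c :: l
    · obtain ⟨p, q, hpq⟩ := List.append_of_mem ha
      rw [hpq] at n ch la
      refine ⟨q, n.of_append_right, (List.isChain_append.1 ch).2.1, ?_⟩
      rw [List.getLast?_append] at la
      simpa [List.getLast?_cons] using la
    · refine ⟨c :: l, List.nodup_cons.2 ⟨ha, n⟩, ?_, ?_⟩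
      · rw [List.isChain_cons_cons]; exact ⟨h1, ch⟩
      · rw [List.getLast?_cons_cons]; exact la

theorem tp_of_compass {D : DG} {L : Lab} (h : IsLocalCompass D L) : TP D L := by
  obtain ⟨ho, hp, hc, ha, hf, hi, hs, hd⟩ := h
  constructor
  · exact ho.1
  · intro u hu v hv
    obtain ⟨l, ⟨l1, l2, l3, l4⟩, h1, h2⟩ := hc u hu v hv
    have := List.relationReflTransGen_of_exists_isChain l l4 l1
    rw [List.head?_eq_some_head l1] at h1
    rw [List.getLast?_eq_some_getLast l1] at h2
    simp at h1 h2
    rwa [h1, h2] at this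
  · rintro ⟨u, v⟩ hg r
    obtain ⟨l, n, ch, la⟩ := exists_nodup r
    simp only at n ch la
    have ch' : (u :: l).IsChain D.semiAdj :=
      ch.imp fun _ _ h => h.imp (fun k => Finset.mem_of_mem_erase k)
        (fun k => Finset.mem_of_mem_erase k)
    refine no_closing ha u l ?_ n ch' ?_ ?_
    · intro w hw
      have key : ∀ (l : List ℕ) (u : ℕ), u ∈ D.verts → (u :: l).IsChain D.semiAdj →
          ∀ w ∈ u :: l, w ∈ D.verts := by
        intro l
        induction l with
        | nil => intro u hu _ w hw; simp at hw; rwa [hw]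
        | cons c l ih =>
          intro u hu ch w hw
          rw [List.isChain_cons_cons] at ch
          rcases List.mem_cons.1 hw with rfl | hw
          · exact hu
          · refine ih c ?_ ch.2 w hw
            rcases ch.1 with h | h
            · exact (ho.1 _ h).2
            · exact (ho.1 _ h).1
      exact key l u (ho.1 _ hg).1 ch' w hw
    · rcases l with _ | ⟨c, _ | ⟨d, l⟩⟩
      · simp at la
        exact absurd la (ho.2.1 _ hg)
      · simp at la
        subst la
        simp [DG.semiAdj, DG.del] at ch
        exact absurd ch.2 (ho.2.2.1 _ _ hg)
      · simp
    · intro w hw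
      rw [la] at hw
      simp at hw
      subst hw
      exact Or.inr hg
  · rintro ⟨u, v⟩ hg ⟨u', v'⟩ hh hw (rfl : u' = u)
    have := (hf.1 _ ⟨hg, hw⟩).2 v' hh
    simp at this
    rw [this]
  · rintro ⟨u, v⟩ hg ⟨u', v'⟩ hh hw (rfl : v' = v)
    have := (hf.2 _ ⟨hg, hw⟩).2 u' hh
    simp at this
    rw [this]
  · exact hi
  · exact hp
  · intro v hv g hg h hh e1 e2 hne
    exact (hs v hv).1 (Finset.one_lt_card.2 ⟨g, Finset.mem_filter.2 ⟨hg, e1⟩, h,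
      Finset.mem_filter.2 ⟨hh, e2⟩, hne⟩)
  · intro v hv g hg h hh e1 e2 hne
    exact (hs v hv).2 (Finset.one_lt_card.2 ⟨g, Finset.mem_filter.2 ⟨hg, e1⟩, h,
      Finset.mem_filter.2 ⟨hh, e2⟩, hne⟩)
  · intro Y g hg h hh r i1 i2
    obtain ⟨l, hl, ⟨t, ht⟩, ⟨s, hs⟩⟩ := walk_path ho ha hg r
    have hY : Ydecent L Y l := by
      cases Y
      · exact (hd l hl).1
      · exact (hd l hl).2
    rcases hY _ _ _ ht with h1 | ⟨c, d, t', h1, h2⟩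
    · exact Or.inl h1
    · right
      rw [hs] at h1
      simp at h1
      obtain ⟨e1, e2, _⟩ := h1
      rw [← e1, ← e2] at h2
      exact h2

/-- Proposition 4.4: for every local compass graph `⟨D, L⟩` there is a
construction `G` such that `λ(G) = ⟨D, L⟩` (the labellings agreeing on the
inner vertices of `D`, where they are defined). -/
theorem prop_4_4 (D : DG) (L : Lab) (h : IsLocalCompass D L) :
    ∃ G : CTree, IsConstruction G ∧ G.rootGraph = D ∧
      ∀ a, D.isInner a → ∀ (Y : YDir) (X : XDir), lamG G a Y X = L a Y X := by
  obtain ⟨G, R⟩ := main_ind _ D L (tp_of_compass h) (Nat.lt_succ_self _)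
  exact ⟨G, R.con, R.root, R.lam⟩

end PluralCuts
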